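/- For n ≥ 6 with n ≡ 1 (mod 4), writing d_n(q) = ∑_{k=1}^{β_n} A_n(k) q^k with β_n = binom(n,2) - 1 and r = n(n-1)/4, the sequence A_n(k)/A_n(β_n + 1 - k) for k = 1, ..., r-1 is strictly increasing, and A_n(r-1)/A_n(r+1) < 1. -/

import Mathlib

open Polynomial

/-- The q-derangement polynomial, defined by the recursion
`d_n(q) = (1+q+⋯+q^{n-1}) d_{n-1}(q) + (-1)^n q^{C(n,2)}` for `n ≥ 2`, with `d_1(q) = 0`. -/
noncomputable def dq : ℕ → Polynomial ℤ
  | 0 => 0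
  | 1 => 0
  | (n + 2) =>
      (∑ i ∈ Finset.range (n + 2), X ^ i) * dq (n + 1)
        + (-1) ^ (n + 2) * X ^ ((n + 2).choose 2)

/-- `A n k` is the coefficient of `q^k` in `d_n(q)`. -/
noncomputable def A (n k : ℕ) : ℤ := (dq n).coeff k

/-!
Two steps of the recursion combine, for odd `n`, into
`d_{n+2} = [n+1] ([n+2] d_n + q^{C(n+1,2)})` with `[m] = 1 + q + ⋯ + q^{m-1}`.
On coefficient sequences, multiplying by `[m]` is a sliding sum of width `m`, and the added monomial
sits at the last exponent of the support of `[n+2] d_n`. Both operations preserve the strict growth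
of `f k / f (N - k)` on `0 < k < N`. For the sliding sums, the difference of the two cross products
is a sum of `2 × 2` minors `f v * f (N - u) - f u * f (N - v)`; those with both `u` and `v` in the
overlap of the two windows cancel by antisymmetry, and in all the others `u < v`. The induction
starts at `n = 5`: at `n = 3` the ratio is constant.
-/

open Finset LaurentPolynomial

theorem sum_mul_sum_lt_sum_mul_sum {ι R : Type*} [NonUnitalNonAssocSemiring R]
    [PartialOrder R] [IsOrderedCancelAddMonoid R] {f g : ι → R} {s t : Finset ι}
    (hle : ∀ u ∈ s, ∀ v ∈ t, ¬(u ∈ t ∧ v ∈ s) → f u * g v ≤ f v * g u)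
    (hlt : ∃ u ∈ s, ∃ v ∈ t, ¬(u ∈ t ∧ v ∈ s) ∧ f u * g v < f v * g u) :
    (∑ u ∈ s, f u) * ∑ v ∈ t, g v < (∑ v ∈ t, f v) * ∑ u ∈ s, g u := by
  classical
  have hsub : (s ∩ t) ×ˢ (s ∩ t) ⊆ s ×ˢ t := product_subset_product inter_subset_left
    inter_subset_right
  have hoverlap : ∑ p ∈ (s ∩ t) ×ˢ (s ∩ t), f p.1 * g p.2 =
      ∑ p ∈ (s ∩ t) ×ˢ (s ∩ t), f p.2 * g p.1 := by
    rw [sum_product, sum_product_right]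
  calc
    (∑ u ∈ s, f u) * ∑ v ∈ t, g v = ∑ p ∈ s ×ˢ t, f p.1 * g p.2 := by
      rw [sum_mul_sum, sum_product]
    _ < ∑ p ∈ s ×ˢ t, f p.2 * g p.1 := by
      rw [← sum_sdiff hsub, ← sum_sdiff hsub, hoverlap]
      refine add_lt_add_left (sum_lt_sum ?_ ?_) _
      · rintro ⟨u, v⟩ huv
        simp only [mem_sdiff, mem_product, mem_inter] at huv
        exact hle u huv.1.1 v huv.1.2 (by tauto)
      · obtain ⟨u, hu, v, hv, huv, h⟩ := hlt
        refine ⟨(u, v), ?_, h⟩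
        simp only [mem_sdiff, mem_product, mem_inter]
        tauto
    _ = (∑ v ∈ t, f v) * ∑ u ∈ s, g u := by
      rw [sum_mul_sum, sum_product_right]

/-- The sliding sum of width `m`: the sum of the `m` consecutive values of `f` ending at `k`. -/
noncomputable def windowSum {R : Type*} [AddCommMonoid R] (m : ℕ) (f : ℤ → R) (k : ℤ) : R :=
  ∑ s ∈ Ioc (k - m) k, f s

theorem windowSum_eq_sum_range {R : Type*} [AddCommMonoid R] (m : ℕ) (f : ℤ → R) (k : ℤ) :
    windowSum m f k = ∑ i ∈ range m, f (k - i) := by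
  refine sum_nbij' (fun s => (k - s).toNat) (fun i => k - i) ?_ ?_ ?_ ?_ ?_ <;>
    intro s hs <;> simp only [mem_Ioc, mem_range] at * <;> grind

theorem windowSum_reflect {R : Type*} [AddCommMonoid R] (m : ℕ) (f : ℤ → R) (N k : ℤ) :
    windowSum m f (N + m - 1 - k) = ∑ s ∈ Ioc (k - m) k, f (N - s) := by
  refine sum_nbij' (N - ·) (N - ·) ?_ ?_ ?_ ?_ ?_ <;>
    intro s hs <;> simp only [mem_Ioc] at * <;> grind

/-- `StrictRatioMono f N` says that `f` is supported exactly on `0 < k < N` and that the ratio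
`f k / f (N - k)` is strictly increasing there, stated by cross-multiplication. -/
structure StrictRatioMono {R : Type*} [Semiring R] [PartialOrder R] (f : ℤ → R) (N : ℤ) :
    Prop where
  pos : ∀ k, 0 < k → k < N → 0 < f k
  eq_zero : ∀ k, ¬(0 < k ∧ k < N) → f k = 0
  mul_lt_mul : ∀ i j, 0 < i → i < j → j < N → f i * f (N - j) < f j * f (N - i)

namespace StrictRatioMono

variable {R : Type*} [Semiring R]

section PartialOrder

variable [PartialOrder R] {f : ℤ → R} {N : ℤ}

theorem nonneg (h : StrictRatioMono f N) (k : ℤ) : 0 ≤ f k := by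
  by_cases hk : 0 < k ∧ k < N
  · exact (h.pos k hk.1 hk.2).le
  · exact (h.eq_zero k hk).ge

variable [IsStrictOrderedRing R]

protected theorem mul_le_mul (h : StrictRatioMono f N) {i j : ℤ} (hij : i < j) :
    f i * f (N - j) ≤ f j * f (N - i) := by
  have hnonneg := mul_nonneg (h.nonneg j) (h.nonneg (N - i))
  by_cases hi : 0 < i
  · by_cases hj : j < N
    · exact (h.mul_lt_mul i j hi hij hj).le
    · rwa [h.eq_zero (N - j) (by lia), mul_zero]
  · rwa [h.eq_zero i (by lia), zero_mul]

protected theorem windowSum (h : StrictRatioMono f N) {m : ℕ} (hm : 2 ≤ m) (hmN : m < N) :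
    StrictRatioMono (windowSum m f) (N + m - 1) where
  pos k hk hkN := sum_pos' (fun s _ => h.nonneg s)
    ⟨min k (N - 1), mem_Ioc.2 (by lia), h.pos _ (by lia) (by lia)⟩
  eq_zero k hk := sum_eq_zero fun s hs => h.eq_zero s (by rw [mem_Ioc] at hs; lia)
  mul_lt_mul i j hi hij hj := by
    rw [windowSum_reflect, windowSum_reflect]
    apply sum_mul_sum_lt_sum_mul_sum
    · intro u hu v hv huv
      simp only [mem_Ioc] at hu hv huv
      exact h.mul_le_mul (by lia)
    · -- This pair of points of the support escapes the overlap because `m < N`.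
      refine ⟨max 1 (i - m + 1), mem_Ioc.2 (by lia), min (N - 1) j, mem_Ioc.2 (by lia), ?_,
        h.mul_lt_mul _ _ (by lia) (by lia) (by lia)⟩
      simp only [mem_Ioc]
      lia

theorem add_single (h : StrictRatioMono f N) (hN : 1 < N) {c : R} (hc : 0 ≤ c) :
    StrictRatioMono (f + Pi.single (N - 1) c) N := by
  set g : ℤ → R := f + Pi.single (N - 1) c with hg
  have hle : f ≤ g := le_add_of_nonneg_right (Pi.single_nonneg.2 hc)
  have heq {k : ℤ} (hk : k ≠ N - 1) : g k = f k := by simp [hg, hk]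
  refine ⟨fun k hk hkN => (h.pos k hk hkN).trans_le (hle k), fun k hk => ?_,
    fun i j hi hij hj => ?_⟩
  · rw [heq (by lia), h.eq_zero k hk]
  · rw [heq (k := i) (by lia), heq (k := N - j) (by lia)]
    exact (h.mul_lt_mul i j hi hij hj).trans_le <|
      mul_le_mul (hle j) (hle _) (h.nonneg _) ((h.nonneg j).trans (hle j))

end PartialOrder

theorem lt_reflect [LinearOrder R] [IsStrictOrderedRing R] {f : ℤ → R} {N k : ℤ}
    (h : StrictRatioMono f N) (hk : 0 < k) (hkN : 2 * k < N) : f k < f (N - k) := by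
  refine lt_of_mul_self_lt_mul_self₀ (h.nonneg _) ?_
  simpa using h.mul_lt_mul k (N - k) hk (by lia) (by lia)

end StrictRatioMono

theorem coeff_toLaurent_natCast {R : Type*} [Semiring R] (p : R[X]) (k : ℕ) :
    (toLaurent p).coeff k = p.coeff k := by
  rw [coeff_toLaurent]
  exact Finsupp.mapDomain_apply Nat.cast_injective _ k

theorem coeff_toLaurent_of_neg {R : Type*} [Semiring R] (p : R[X]) {k : ℤ} (hk : k < 0) :
    (toLaurent p).coeff k = 0 := by
  rw [coeff_toLaurent]
  refine Finsupp.mapDomain_of_notMem_range _ _ ?_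
  rintro ⟨n, rfl⟩
  exact (Int.natCast_nonneg n).not_gt hk

theorem coeff_mul_T {R : Type*} [Semiring R] (p : R[T;T⁻¹]) (n k : ℤ) :
    (p * T n).coeff k = p.coeff (k - n) := by
  rw [T, AddMonoidAlgebra.coeff_mul_single_apply, mul_one, sub_eq_add_neg]

theorem coeff_toLaurent_geom_sum_mul {R : Type*} [Semiring R] (m : ℕ) (p : R[X]) (k : ℤ) :
    (toLaurent ((∑ i ∈ range m, X ^ i) * p)).coeff k = windowSum m (toLaurent p).coeff k := by
  rw [windowSum_eq_sum_range]
  simp [sum_mul, coeff_mul_T, -coeff_toLaurent]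

theorem choose_two_succ (n : ℕ) : (n + 1).choose 2 = n + n.choose 2 := by
  rw [Nat.choose_succ_succ' n 1, Nat.choose_one_right]

theorem dq_add_two_of_odd {n : ℕ} (hn : Odd n) :
    dq (n + 2) = (∑ i ∈ range (n + 1), X ^ i) *
      ((∑ i ∈ range (n + 2), X ^ i) * dq n + X ^ (n + 1).choose 2) := by
  have hsucc : dq (n + 1) = (∑ i ∈ range (n + 1), X ^ i) * dq n + X ^ (n + 1).choose 2 := by
    obtain ⟨m, rfl⟩ := Nat.exists_eq_add_one.2 hn.pos
    have heven : Even (m + 2) := hn.add_one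
    rw [dq, heven.neg_one_pow, one_mul]
  rw [dq, hsucc, (hn.add_even even_two).neg_one_pow, choose_two_succ (n + 1), pow_add,
    sum_range_succ _ (n + 1)]
  ring

theorem coeff_toLaurent_dq_add_two {n : ℕ} (hn : Odd n) :
    ⇑(toLaurent (dq (n + 2))).coeff = windowSum (n + 1)
      (windowSum (n + 2) (toLaurent (dq n)).coeff + Pi.single ((n + 1).choose 2 : ℤ) 1) := by
  ext k
  rw [dq_add_two_of_odd hn, coeff_toLaurent_geom_sum_mul]
  congr 1
  ext l
  rw [map_add, AddMonoidAlgebra.coeff_add, Finsupp.add_apply, coeff_toLaurent_geom_sum_mul,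
    Polynomial.toLaurent_X_pow, T_apply, Pi.add_apply, Pi.single_apply]
  simp only [eq_comm]

theorem dq_five : dq 5 = X + 3 * X ^ 2 + 5 * X ^ 3 + 7 * X ^ 4 + 8 * X ^ 5 + 8 * X ^ 6
    + 6 * X ^ 7 + 4 * X ^ 8 + 2 * X ^ 9 := by
  rw [dq_add_two_of_odd (n := 3) (by decide), dq_add_two_of_odd (n := 1) (by decide)]
  simp only [dq, sum_range_succ, Nat.choose]
  ring

theorem coeff_dq_five (k : ℕ) :
    (dq 5).coeff k = [0, 1, 3, 5, 7, 8, 8, 6, 4, 2].getD k 0 := by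
  rw [dq_five]
  obtain hk | hk := lt_or_ge k 10
  · interval_cases k <;> simp [coeff_X, coeff_X_pow]
  · rw [List.getD_eq_default _ _ hk]
    have hdeg : natDegree (X + 3 * X ^ 2 + 5 * X ^ 3 + 7 * X ^ 4 + 8 * X ^ 5 + 8 * X ^ 6
        + 6 * X ^ 7 + 4 * X ^ 8 + 2 * X ^ 9 : ℤ[X]) ≤ 9 := by compute_degree
    exact coeff_eq_zero_of_natDegree_lt (hdeg.trans_lt hk)

theorem coeff_toLaurent_dq_five (k : ℤ) :
    (toLaurent (dq 5)).coeff k = [0, 1, 3, 5, 7, 8, 8, 6, 4, 2].getD k.toNat 0 := by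
  obtain hk | hk := lt_or_ge k 0
  · rw [Int.toNat_of_nonpos hk.le, coeff_toLaurent_of_neg _ hk, List.getD_cons_zero]
  · lift k to ℕ using hk
    rw [coeff_toLaurent_natCast, coeff_dq_five, Int.toNat_natCast]

theorem strictRatioMono_dq_five : StrictRatioMono (toLaurent (dq 5)).coeff 10 where
  pos k hk hkN := by
    rw [coeff_toLaurent_dq_five]
    interval_cases k <;> decide
  eq_zero k hk := by
    rw [coeff_toLaurent_dq_five]
    obtain hk | hk : k ≤ 0 ∨ 10 ≤ k := by lia
    · rw [Int.toNat_of_nonpos hk, List.getD_cons_zero]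
    · exact List.getD_eq_default _ _ (show 10 ≤ k.toNat by lia)
  mul_lt_mul i j hi hij hj := by
    simp only [coeff_toLaurent_dq_five]
    have hi' : i < 9 := by lia
    interval_cases i <;> interval_cases j <;> decide

theorem strictRatioMono_dq_add_two {n : ℕ} (hn : 5 ≤ n) (hodd : Odd n)
    (h : StrictRatioMono (toLaurent (dq n)).coeff (n.choose 2)) :
    StrictRatioMono (toLaurent (dq (n + 2))).coeff ((n + 2).choose 2) := by
  have hchoose₁ := choose_two_succ n
  have hchoose₂ := choose_two_succ (n + 1)
  have hlt : n + 2 < n.choose 2 := by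
    have hmul : n * 4 ≤ n * (n - 1) := Nat.mul_le_mul_left n (by lia)
    rw [Nat.choose_two_right]
    lia
  have htop : (n.choose 2 + (n + 2 : ℕ) - 1 - 1 : ℤ) = (n + 1).choose 2 := by lia
  have hsupport : ((n + 2).choose 2 : ℤ) = n.choose 2 + (n + 2 : ℕ) - 1 + (n + 1 : ℕ) - 1 := by
    lia
  rw [coeff_toLaurent_dq_add_two hodd, ← htop, hsupport]
  exact ((h.windowSum (by lia) (by lia)).add_single (by lia) zero_le_one).windowSum (by lia)
    (by lia)

theorem strictRatioMono_dq {n : ℕ} (hn : 5 ≤ n) (hodd : Odd n) :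
    StrictRatioMono (toLaurent (dq n)).coeff (n.choose 2) := by
  obtain ⟨t, rfl⟩ : ∃ t, n = 5 + 2 * t := by
    obtain ⟨s, rfl⟩ := hodd
    exact ⟨s - 2, by lia⟩
  clear hn hodd
  induction t with
  | zero => exact strictRatioMono_dq_five
  | succ t ih => exact strictRatioMono_dq_add_two (by lia) ⟨t + 2, by lia⟩ ih

theorem A_mul_A_lt_A_mul_A {n : ℕ} (hn : 5 ≤ n) (hodd : Odd n) {i j : ℕ} (hi : 0 < i)
    (hij : i < j) (hj : j < n.choose 2) :
    A n i * A n (n.choose 2 - j) < A n j * A n (n.choose 2 - i) := by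
  have h := (strictRatioMono_dq hn hodd).mul_lt_mul i j (by lia) (by lia) (by lia)
  simpa only [A, ← Nat.cast_sub hj.le, ← Nat.cast_sub (hij.trans hj).le, coeff_toLaurent_natCast]
    using h

theorem A_pos {n : ℕ} (hn : 5 ≤ n) (hodd : Odd n) {k : ℕ} (hk : 0 < k) (hkN : k < n.choose 2) :
    0 < A n k := by
  have h := (strictRatioMono_dq hn hodd).pos k (by lia) (by lia)
  rwa [coeff_toLaurent_natCast] at h

theorem A_lt_A_reflect {n : ℕ} (hn : 5 ≤ n) (hodd : Odd n) {k : ℕ} (hk : 0 < k)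
    (hkN : 2 * k < n.choose 2) : A n k < A n (n.choose 2 - k) := by
  have h := (strictRatioMono_dq hn hodd).lt_reflect (k := k) (by lia) (by lia)
  rwa [← Nat.cast_sub (by lia), coeff_toLaurent_natCast, coeff_toLaurent_natCast] at h

theorem stmt_14_general {n : ℕ} (hn : 5 ≤ n) (hodd : Odd n) :
    StrictMonoOn (fun k => (A n k : ℚ) / A n (n.choose 2 - k)) (Set.Ioo 0 (n.choose 2)) ∧
      ∀ k, 0 < k → 2 * k < n.choose 2 → (A n k : ℚ) / A n (n.choose 2 - k) < 1 := by
  have hpos {k : ℕ} (hk : 0 < k) (hkN : k < n.choose 2) : (0 : ℚ) < A n (n.choose 2 - k) :=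
    mod_cast A_pos hn hodd (Nat.sub_pos_of_lt hkN) (Nat.sub_lt (hk.trans hkN) hk)
  refine ⟨fun i hi j hj hij => ?_, fun k hk hkN => ?_⟩
  · rw [div_lt_div_iff₀ (hpos hi.1 hi.2) (hpos hj.1 hj.2)]
    exact_mod_cast A_mul_A_lt_A_mul_A hn hodd hi.1 hij hj.2
  · rw [div_lt_one (hpos hk (by lia))]
    exact_mod_cast A_lt_A_reflect hn hodd hk hkN

theorem choose_two_eq_of_mod_four_eq_one {n : ℕ} (hmod : n % 4 = 1) :
    n.choose 2 = 2 * (n * (n - 1) / 4) := by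
  have hdvd : 4 ∣ n * (n - 1) := Dvd.dvd.mul_left (by lia) n
  rw [Nat.choose_two_right]
  lia

theorem stmt_14 (n : ℕ) (hn : 6 ≤ n) (hmod : n % 4 = 1) :
    (∀ k, 1 ≤ k → k + 1 ≤ n * (n - 1) / 4 - 1 →
      (A n k : ℚ) / (A n (n.choose 2 - 1 + 1 - k) : ℚ) <
        (A n (k + 1) : ℚ) / (A n (n.choose 2 - 1 + 1 - (k + 1)) : ℚ)) ∧
    (A n (n * (n - 1) / 4 - 1) : ℚ) / (A n (n * (n - 1) / 4 + 1) : ℚ) < 1 := by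
  obtain ⟨hmono, hlt⟩ := stmt_14_general (n := n) (by lia) (Nat.odd_iff.2 (by lia))
  have hchoose := choose_two_eq_of_mod_four_eq_one hmod
  have hmul := Nat.mul_le_mul hn (show 5 ≤ n - 1 by lia)
  refine ⟨fun k hk hkr => ?_, ?_⟩
  · rw [Nat.sub_add_cancel (by lia)]
    exact hmono ⟨by lia, by lia⟩ ⟨by lia, by lia⟩ k.lt_succ_self
  · convert hlt (n * (n - 1) / 4 - 1) (by lia) (by lia) using 4
    lia
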